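/- arXiv:2403.20220 — 2 statements merged into one kernel-verified Lean document; each statement's English description precedes it below -/
import Mathlib

section
/- Let π : B → T be a surjective ring homomorphism whose kernel is a regular ideal of B (contains a non-zero-divisor of B), let R be a subring of T such that T is an overring of R, and set A := π⁻¹(R). Then A is a Prüfer ring if and only if both B and R are Prüfer rings. -/
/-!
Call `A → B` a Prüfer extension if `(A : x) + x (A : x) = A` for every `x ∈ B`. This condition says
that the `A`-module `A + A x` is invertible, it is transitive in towers, and it can be tested modulo
an ideal common to `A` and `B`; moreover `A` is a Prüfer ring iff `A → Tot A` is a Prüfer extension.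
For `A = π⁻¹(R)`, the regular ideal `ker π` common to `A` and `B` forces `Tot A = Tot B`, so `A` is
Prüfer iff `A → B` and `B → Tot B` are Prüfer extensions, i.e. iff `R → T` is a Prüfer extension and
`B` is Prüfer. If `R` is Prüfer, then `R → T` is a Prüfer extension because `T ⊆ Tot R`. Conversely,
if `A` is Prüfer then so is its quotient `R` by a regular ideal: adjoining an element of the kernel
to lifts of the generators of an ideal of `R` yields an invertible ideal of `A`.
-/

/-- A Prüfer ring: every finitely generated regular ideal is invertible
(as a submodule of the total ring of fractions). -/
def IsPruferRing (R : Type*) [CommRing R] : Prop :=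
  ∀ I : Ideal R, I.FG → (∃ r ∈ I, r ∈ nonZeroDivisors R) →
    ∃ J : Submodule R (FractionRing R),
      Submodule.map (Algebra.linearMap R (FractionRing R)) I * J = 1

open Submodule nonZeroDivisors

/-- Prüfer extensions in the sense of Knebusch and Zhang, used here to compare a ring with the rings
between it and its total ring of fractions. The defining condition `(A : x) + x (A : x) = A` is
spelled out on elements: `z = y x` lies in `x (A : x)` and `1 - z` lies in `(A : x)`. The structure
map `A → B` is not required to be injective. -/
def IsPruferExtension (A B : Type*) [CommRing A] [CommRing B] [Algebra A B] : Prop :=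
  ∀ x : B, ∃ y z w : A, y • x = algebraMap A B z ∧ (1 - z) • x = algebraMap A B w

namespace IsPruferExtension

section Invertible

variable {A B : Type*} [CommRing A] [CommRing B] [Algebra A B]

-- If `N J = 1` and `m ∈ J`, the defining condition at `x m` provides `y` and `z` such that
-- `y m` and `(1 - z) m` both multiply `N + A x` into `A`.
theorem isUnit_sup_span_singleton (h : IsPruferExtension A B) {N : Submodule A B}
    (hN : IsUnit N) (x : B) : IsUnit (N ⊔ span A {x}) := by
  obtain ⟨J, hJ⟩ := isUnit_iff_exists_inv.1 hN
  refine isUnit_iff_exists_inv.2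
    ⟨1 / (N ⊔ span A {x}), le_antisymm mul_one_div_le_one ?_⟩
  rw [← hJ, mul_le, hJ]
  intro n hn m hm
  have hmN : ∀ n ∈ N, n * m ∈ (1 : Submodule A B) := fun n hn ↦ hJ ▸ mul_mem_mul hn hm
  obtain ⟨y, z, w, hy, hw⟩ := h (x * m)
  have smul_mem_one_div (s a : A) (hs : s • (x * m) = algebraMap A B a) :
      s • m ∈ 1 / (N ⊔ span A {x}) := by
    refine mem_div_iff_forall_mul_mem.2 fun p hp ↦ ?_
    obtain ⟨n, hn, _, hb, rfl⟩ := mem_sup.1 hp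
    obtain ⟨b, rfl⟩ := mem_span_singleton.1 hb
    have hsx : s • m * b • x = b • algebraMap A B a := by
      rw [← hs]
      simp only [Algebra.smul_def]
      ring
    rw [mul_add, hsx, smul_mul_assoc, mul_comm m]
    exact add_mem (smul_mem _ s (hmN n hn)) (smul_mem _ b (mem_one.2 ⟨a, rfl⟩))
  obtain ⟨a, ha⟩ := mem_one.1 (hmN n hn)
  have hsplit : n * m = n * (1 - z) • m + a • (x * y • m) := by
    rw [mul_smul_comm y, hy, mul_smul_comm, ← ha]
    simp only [Algebra.smul_def, map_sub, map_one]
    ring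
  rw [hsplit]
  exact add_mem
    (mul_mem_mul (mem_sup_left hn) (smul_mem_one_div _ w hw))
    (smul_mem _ a (mul_mem_mul (mem_sup_right (mem_span_singleton_self x))
      (smul_mem_one_div y z hy)))

theorem isUnit_sup_of_fg (h : IsPruferExtension A B) {M : Submodule A B} (hM : M.FG)
    {N : Submodule A B} (hN : IsUnit N) : IsUnit (N ⊔ M) := by
  induction M, hM using fg_induction generalizing N with
  | singleton x => exact h.isUnit_sup_span_singleton hN x
  | sup M₁ M₂ _ _ ih₁ ih₂ => exact sup_assoc N M₁ M₂ ▸ ih₂ (ih₁ hN)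

theorem isUnit_of_fg_of_mem (h : IsPruferExtension A B) {M : Submodule A B} (hM : M.FG)
    {u : B} (hu : IsUnit u) (huM : u ∈ M) : IsUnit M := by
  have hspan : IsUnit (span A {u}) := by
    obtain ⟨v, hv⟩ := hu.exists_right_inv
    exact isUnit_iff_exists_inv.2
      ⟨span A {v}, by rw [span_mul_span, Set.singleton_mul_singleton, hv, one_eq_span]⟩
  simpa [huM] using h.isUnit_sup_of_fg hM hspan

theorem of_isUnit_span_pair (h : ∀ x : B, IsUnit (span A {1, x})) : IsPruferExtension A B := by
  intro x
  obtain ⟨J, hJ⟩ := isUnit_iff_exists_inv.1 (h x)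
  have mul_mem_one {s : B} (hs : s ∈ ({1, x} : Set B)) {q : B} (hq : q ∈ J) :
      s * q ∈ (1 : Submodule A B) := hJ ▸ mul_mem_mul (subset_span hs) hq
  have hone : (1 : B) ∈ span A {1, x} * J := hJ ▸ one_le.1 le_rfl
  simp only [span_insert, Submodule.sup_mul, mem_sup, mem_span_singleton_mul,
    exists_exists_and_eq_and] at hone
  obtain ⟨p, hp, q, hq, hpq⟩ := hone
  obtain ⟨y, hy⟩ := mem_one.1 (mul_mem_one (.inl rfl) hq)
  obtain ⟨z, hz⟩ := mem_one.1 (mul_mem_one (.inr rfl) hq)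
  obtain ⟨w, hw⟩ := mem_one.1 (mul_mem_one (.inr rfl) hp)
  refine ⟨y, z, w, ?_, ?_⟩
  · rw [Algebra.smul_def, hy, hz]
    ring
  · rw [Algebra.smul_def, map_sub, map_one, hz, hw]
    linear_combination -x * hpq

end Invertible

section Tower

variable {A B C : Type*} [CommRing A] [CommRing B] [CommRing C] [Algebra A B] [Algebra A C]

theorem of_injective (h : IsPruferExtension A C) (f : B →ₐ[A] C) (hf : Function.Injective f) :
    IsPruferExtension A B := by
  intro x
  obtain ⟨y, z, w, hy, hw⟩ := h (f x)
  exact ⟨y, z, w, hf (by rwa [map_smul, f.commutes]), hf (by rwa [map_smul, f.commutes])⟩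

variable [Algebra B C] [IsScalarTower A B C]

theorem tower_top (h : IsPruferExtension A C) : IsPruferExtension B C := by
  intro x
  obtain ⟨y, z, w, hy, hw⟩ := h x
  refine ⟨algebraMap A B y, algebraMap A B z, algebraMap A B w, ?_, ?_⟩
  · rwa [algebraMap_smul, ← IsScalarTower.algebraMap_apply]
  · rwa [← map_one (algebraMap A B), ← map_sub, algebraMap_smul,
      ← IsScalarTower.algebraMap_apply]

theorem trans (hAB : IsPruferExtension A B) (hBC : IsPruferExtension B C) :
    IsPruferExtension A C := by
  refine of_isUnit_span_pair fun x ↦ ?_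
  obtain ⟨y, z, w, hy, hw⟩ := hBC x
  have hM : IsUnit (span A {y, z, 1 - z, w}) := by
    refine hAB.isUnit_of_fg_of_mem (fg_span (Set.toFinite _)) isUnit_one ?_
    rw [← add_sub_cancel z 1]
    exact add_mem (subset_span (by simp)) (subset_span (by simp))
  -- The product comes from a module inside `B` that `hAB` makes invertible, hence so is its factor.
  have hmul : span A {1, x} * span A {algebraMap B C y, algebraMap B C (1 - z)} =
      (span A {y, z, 1 - z, w}).map (IsScalarTower.toAlgHom A B C).toLinearMap := by
    rw [Algebra.smul_def, mul_comm] at hy hw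
    rw [span_mul_span, map_span]
    congr 1
    simp only [Set.insert_eq, Set.union_mul, Set.mul_union, Set.singleton_mul_singleton, one_mul,
      hy, hw, Set.image_union, Set.image_singleton, AlgHom.toLinearMap_apply,
      IsScalarTower.coe_toAlgHom', Set.union_assoc]
  refine isUnit_of_mul_isUnit_left (y := span A {algebraMap B C y, algebraMap B C (1 - z)}) ?_
  rw [hmul]
  exact hM.map (mapHom (IsScalarTower.toAlgHom A B C))

theorem iff_of_tower (hinj : Function.Injective (algebraMap B C)) :
    IsPruferExtension A C ↔ IsPruferExtension A B ∧ IsPruferExtension B C :=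
  ⟨fun h ↦ ⟨h.of_injective (IsScalarTower.toAlgHom A B C) hinj, h.tower_top⟩,
    fun h ↦ h.1.trans h.2⟩

end Tower

section Subring

variable {B T : Type*} [CommRing B] [CommRing T]

theorem subring_iff (S : Subring B) :
    IsPruferExtension S B ↔ ∀ x : B, ∃ y ∈ S, y * x ∈ S ∧ (1 - y * x) * x ∈ S := by
  refine forall_congr' fun x ↦ ⟨?_, ?_⟩
  · rintro ⟨y, z, w, hy : (y : B) * x = z, hw : (1 - (z : B)) * x = w⟩
    exact ⟨y, y.2, hy ▸ z.2, hy ▸ hw ▸ w.2⟩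
  · rintro ⟨y, hy, hz, hw⟩
    exact ⟨⟨y, hy⟩, ⟨y * x, hz⟩, ⟨_, hw⟩, rfl, rfl⟩

theorem comap_iff {π : B →+* T} (hπ : Function.Surjective π) (R : Subring T) :
    IsPruferExtension (R.comap π) B ↔ IsPruferExtension R T := by
  simp only [subring_iff, hπ.forall, hπ.exists, Subring.mem_comap, map_mul, map_sub, map_one]

end Subring

end IsPruferExtension

section FractionRing

theorem isFractionRing_of_mul_mem_range {A B K : Type*} [CommRing A] [CommRing B] [CommRing K]
    [Algebra A B] [Algebra B K] [Algebra A K] [IsScalarTower A B K] [IsFractionRing B K]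
    (hinj : Function.Injective (algebraMap A B)) {c : B} (hc : c ∈ B⁰)
    (hcA : ∀ b, c * b ∈ (algebraMap A B).range) : IsFractionRing A K := by
  have algebraMap_mem (a : A) (ha : a ∈ A⁰) : algebraMap A B a ∈ B⁰ := by
    refine mem_nonZeroDivisors_iff_right.2 fun b hb ↦ ?_
    obtain ⟨a', ha'⟩ := hcA b
    have : a' * a = 0 := hinj (by rw [map_mul, ha', mul_assoc, hb, mul_zero, map_zero])
    rw [(mul_right_mem_nonZeroDivisors_eq_zero_iff ha).1 this, map_zero] at ha'
    exact (mul_left_mem_nonZeroDivisors_eq_zero_iff hc).1 ha'.symm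
  refine ⟨fun a ↦ ?_, fun x ↦ ?_, fun {a b} hab ↦ ⟨1, ?_⟩⟩
  · rw [IsScalarTower.algebraMap_apply A B K]
    exact IsLocalization.map_units K (⟨_, algebraMap_mem a a.2⟩ : B⁰)
  · obtain ⟨⟨b, d⟩, hbd⟩ := IsLocalization.surj B⁰ x
    obtain ⟨b', hb'⟩ := hcA b
    obtain ⟨d', hd'⟩ := hcA d
    have hd'A : d' ∈ A⁰ := mem_nonZeroDivisors_of_injective hinj (hd' ▸ mul_mem hc d.2)
    refine ⟨⟨b', d', hd'A⟩, ?_⟩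
    simp only [IsScalarTower.algebraMap_apply A B K, hb', hd', map_mul]
    linear_combination algebraMap B K c * hbd
  · rw [IsScalarTower.algebraMap_apply A B K, IsScalarTower.algebraMap_apply A B K] at hab
    rw [hinj (IsFractionRing.injective B K hab)]

variable {A : Type*} [CommRing A]

theorem isPruferRing_iff_isPruferExtension (K : Type*) [CommRing K] [Algebra A K]
    [IsFractionRing A K] : IsPruferRing A ↔ IsPruferExtension A K := by
  let e : K ≃ₐ[A] FractionRing A := (FractionRing.algEquiv A K).symm
  suffices IsPruferRing A ↔ IsPruferExtension A (FractionRing A) from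
    this.trans ⟨fun h ↦ h.of_injective e.toAlgHom e.injective,
      fun h ↦ h.of_injective e.symm.toAlgHom e.symm.injective⟩
  refine ⟨fun h ↦ .of_isUnit_span_pair fun x ↦ ?_, fun h I hI ⟨r, hrI, hr⟩ ↦ ?_⟩
  · obtain ⟨⟨a, b⟩, hab⟩ := IsLocalization.surj A⁰ x
    have hI : IsUnit (Submodule.map (Algebra.linearMap A (FractionRing A))
        (Ideal.span {(b : A), a})) :=
      isUnit_iff_exists_inv.2
        (h _ (fg_span (Set.toFinite _)) ⟨b, Ideal.subset_span (by simp), b.2⟩)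
    have hmul : span A {algebraMap A (FractionRing A) b} * span A {1, x} =
        Submodule.map (Algebra.linearMap A (FractionRing A)) (Ideal.span {(b : A), a}) := by
      rw [Ideal.span, map_span, span_mul_span, Set.image_pair]
      simp only [Set.insert_eq, Set.mul_union, Set.singleton_mul_singleton, mul_one,
        mul_comm _ x, hab, Algebra.linearMap_apply]
    exact isUnit_of_mul_isUnit_right (hmul ▸ hI)
  · exact isUnit_iff_exists_inv.1 <| h.isUnit_of_fg_of_mem (Submodule.FG.map _ hI)
      (IsLocalization.map_units _ (⟨r, hr⟩ : A⁰)) (mem_map_of_mem hrI)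

-- Modulo `c` this is the condition defining a Prüfer extension at `x = a / b`, with denominators
-- cleared.
theorem IsPruferRing.exists_mul_eq_mul (h : IsPruferRing A) (a b : A) {c : A} (hc : c ∈ A⁰) :
    ∃ y z w v, y * a = z * b ∧ (1 - z) * a = w * b + v * c := by
  let φ := algebraMap A (FractionRing A)
  have hφ : Function.Injective φ := IsFractionRing.injective A (FractionRing A)
  have hunit : IsUnit (span A {φ a, φ b, φ c}) :=
    ((isPruferRing_iff_isPruferExtension (FractionRing A)).1 h).isUnit_of_fg_of_mem
      (fg_span (Set.toFinite _)) (IsLocalization.map_units _ (⟨c, hc⟩ : A⁰))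
      (subset_span (.inr (.inr rfl)))
  obtain ⟨J, hJ⟩ := isUnit_iff_exists_inv.1 hunit
  have exists_eq_mul {s : FractionRing A} (hs : s ∈ ({φ a, φ b, φ c} : Set (FractionRing A)))
      {q : FractionRing A} (hq : q ∈ J) : ∃ t, φ t = s * q :=
    mem_one.1 (hJ ▸ mul_mem_mul (subset_span hs) hq)
  have hone : (1 : FractionRing A) ∈ span A {φ a, φ b, φ c} * J := hJ ▸ one_le.1 le_rfl
  simp only [span_insert, Submodule.sup_mul, mem_sup, mem_span_singleton_mul,
    exists_exists_and_eq_and] at hone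
  obtain ⟨p, hp, _, ⟨q, hq, r, hr, rfl⟩, hpqr⟩ := hone
  obtain ⟨y, hy⟩ := exists_eq_mul (s := φ b) (by simp) hp
  obtain ⟨z, hz⟩ := exists_eq_mul (s := φ a) (by simp) hp
  obtain ⟨w, hw⟩ := exists_eq_mul (s := φ a) (by simp) hq
  obtain ⟨v, hv⟩ := exists_eq_mul (s := φ a) (by simp) hr
  refine ⟨y, z, w, v, hφ ?_, hφ ?_⟩
  · rw [map_mul, map_mul, hy, hz]
    ring
  · simp only [map_mul, map_add, map_sub, map_one, hz, hw, hv]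
    linear_combination -φ a * hpqr

theorem IsPruferRing.of_surjective {R : Type*} [CommRing R] (h : IsPruferRing A) {f : A →+* R}
    (hf : Function.Surjective f) (hker : ∃ c ∈ RingHom.ker f, c ∈ A⁰) : IsPruferRing R := by
  obtain ⟨c, hc0, hc⟩ := hker
  refine (isPruferRing_iff_isPruferExtension (FractionRing R)).2 fun x ↦ ?_
  obtain ⟨⟨r, s⟩, hrs⟩ := IsLocalization.surj R⁰ x
  obtain ⟨a, rfl⟩ := hf r
  obtain ⟨b, hb⟩ := hf s
  obtain ⟨y, z, w, v, hy, hz⟩ := h.exists_mul_eq_mul a b hc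
  apply_fun f at hy hz
  simp only [map_mul, map_add, map_sub, map_one, RingHom.mem_ker.1 hc0, mul_zero, add_zero,
    hb] at hy hz
  have hs : IsUnit (algebraMap R (FractionRing R) s) := IsLocalization.map_units _ s
  have smul_eq {u t : R} (hut : u * f a = t * s) : u • x = algebraMap R (FractionRing R) t :=
    hs.mul_right_cancel (by rw [smul_mul_assoc, hrs, Algebra.smul_def, ← map_mul, hut, map_mul])
  exact ⟨f y, f z, f w, smul_eq hy, smul_eq hz⟩

end FractionRing

section Pullback

variable {B T : Type*} [CommRing B] [CommRing T] {π : B →+* T}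

theorem IsPruferRing.of_comap {R : Subring T} (h : IsPruferRing (R.comap π))
    (hπ : Function.Surjective π) (hker : ∃ b ∈ RingHom.ker π, b ∈ B⁰) : IsPruferRing R := by
  obtain ⟨c, hc0, hc⟩ := hker
  have hcR : c ∈ R.comap π := by simp [RingHom.mem_ker.1 hc0]
  have hsurj : Function.Surjective (π.restrict (R.comap π) R fun _ h ↦ h) := by
    rintro ⟨t, ht⟩
    obtain ⟨b, rfl⟩ := hπ t
    exact ⟨⟨b, ht⟩, rfl⟩
  exact h.of_surjective hsurj ⟨⟨c, hcR⟩, Subtype.ext hc0,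
    mem_nonZeroDivisors_of_injective (f := (R.comap π).subtype) Subtype.val_injective hc⟩

theorem isPruferRing_comap_iff (hπ : Function.Surjective π)
    (hker : ∃ b ∈ RingHom.ker π, b ∈ B⁰) (R : Subring T) :
    IsPruferRing (R.comap π) ↔ IsPruferRing B ∧ IsPruferExtension R T := by
  obtain ⟨c, hc0, hc⟩ := hker
  have hcA (b : B) : c * b ∈ (algebraMap (R.comap π) B).range :=
    ⟨⟨c * b, by simp [RingHom.mem_ker.1 hc0]⟩, rfl⟩
  have : IsFractionRing (R.comap π) (FractionRing B) :=
    isFractionRing_of_mul_mem_range Subtype.val_injective hc hcA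
  rw [isPruferRing_iff_isPruferExtension (FractionRing B),
    isPruferRing_iff_isPruferExtension (A := B) (FractionRing B),
    IsPruferExtension.iff_of_tower (IsFractionRing.injective B (FractionRing B)),
    IsPruferExtension.comap_iff hπ, and_comm]

end Pullback

theorem stmt8 {B T : Type*} [CommRing B] [CommRing T] (π : B →+* T)
    (hπ : Function.Surjective π)
    (hker : ∃ b ∈ RingHom.ker π, b ∈ nonZeroDivisors B)
    (R : Subring T)
    (hover : ∃ j : T →+* FractionRing R, Function.Injective j ∧
        ∀ r : R, j (r : T) = algebraMap R (FractionRing R) r) :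
    IsPruferRing (Subring.comap π R) ↔ (IsPruferRing B ∧ IsPruferRing R) := by
  refine ⟨fun hA ↦ ⟨((isPruferRing_comap_iff hπ hker R).1 hA).1, hA.of_comap hπ hker⟩, ?_⟩
  rintro ⟨hB, hR⟩
  obtain ⟨j, hj, hjr⟩ := hover
  have hRK : IsPruferExtension R (FractionRing R) := (isPruferRing_iff_isPruferExtension _).1 hR
  have hRT : IsPruferExtension R T := hRK.of_injective { j with commutes' := hjr } hj
  exact (isPruferRing_comap_iff hπ hker R).2 ⟨hB, hRT⟩
end

section
/- Let R be a Noetherian pre-Prüfer ring. Then the Krull dimension of R is at most 1. -/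
/-- A pre-Prüfer ring: every proper homomorphic image is a Prüfer ring. -/
def IsPrePruferRing (R : Type*) [CommRing R] : Prop :=
  ∀ I : Ideal R, I ≠ ⊥ → I ≠ ⊤ → IsPruferRing (R ⧸ I)

/-! Let `p` and `q` be incomparable primes inside a common prime, with `p ⊓ q ≠ ⊥`. Choosing
`a ∈ p` outside `q` and `b ∈ q` outside `p`, the image of the ideal `(a, b)` in `R ⧸ (p ⊓ q)` is
regular, because it contains `a + b`, hence invertible; since `a * b = 0` there, this forces
`p ⊔ q = ⊤`, which is absurd. On the other hand, a chain `p₀ < p₁ < p₂` of primes in a Noetherian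
ring can be arranged to end in a cover `p₁ ⋖ p₂`, and Krull's principal ideal theorem gives a prime
strictly between `p₀` and `p₂` containing a given element of `p₂` outside `p₁`. It is incomparable
with `p₁`, and the two have nonzero intersection because `p₀` is prime and contains neither. -/

section Prufer

theorem exists_mul_add_mul_eq_one_of_span_pair_mul_eq_one {R A : Type*} [CommSemiring R]
    [Semiring A] [Algebra R A] {x y : A} {J : Submodule R A}
    (hJ : Submodule.span R {x, y} * J = 1) : ∃ u ∈ J, ∃ v ∈ J, x * u + y * v = 1 := by
  have one_mem : (1 : A) ∈ Submodule.span R {x, y} * J := hJ ▸ Submodule.one_le.mp le_rfl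
  rw [Submodule.span_insert, Submodule.sup_mul, Submodule.mem_sup] at one_mem
  obtain ⟨_, hxu, _, hyv, huv⟩ := one_mem
  obtain ⟨u, hu, rfl⟩ := Submodule.mem_span_singleton_mul.mp hxu
  obtain ⟨v, hv, rfl⟩ := Submodule.mem_span_singleton_mul.mp hyv
  exact ⟨u, hu, v, hv, huv⟩

variable {R : Type*} [CommRing R]

theorem IsPruferRing.exists_span_pair_mul_eq_one (h : IsPruferRing R) {a b r : R}
    (hr : r ∈ Ideal.span {a, b}) (hreg : r ∈ nonZeroDivisors R) :
    ∃ J : Submodule R (FractionRing R),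
      Submodule.span R {algebraMap R (FractionRing R) a, algebraMap R (FractionRing R) b} * J
        = 1 := by
  obtain ⟨J, hJ⟩ := h (Ideal.span {a, b}) (Submodule.fg_span (Set.toFinite _)) ⟨r, hr, hreg⟩
  refine ⟨J, ?_⟩
  rwa [Ideal.span, Submodule.map_span, Set.image_pair] at hJ

theorem IsPruferRing.exists_mul_eq_self_and_mul_eq_zero (h : IsPruferRing R) {a b : R}
    (hab : a * b = 0) (hreg : a + b ∈ nonZeroDivisors R) :
    ∃ e : R, e * a = a ∧ e * b = 0 := by
  let f := algebraMap R (FractionRing R)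
  have f_injective : Function.Injective f := IsFractionRing.injective R (FractionRing R)
  have fab : f a * f b = 0 := by rw [← map_mul, hab, map_zero]
  have add_mem_span : a + b ∈ Ideal.span {a, b} :=
    Ideal.mem_span_pair.mpr ⟨1, 1, by rw [one_mul, one_mul]⟩
  obtain ⟨J, hJ⟩ := h.exists_span_pair_mul_eq_one add_mem_span hreg
  obtain ⟨u, hu, v, -, huv⟩ := exists_mul_add_mul_eq_one_of_span_pair_mul_eq_one hJ
  obtain ⟨e, he : f e = f a * u⟩ : ∃ e, f e = f a * u :=
    Submodule.mem_one.mp <| hJ ▸ Submodule.mul_mem_mul (Submodule.subset_span (.inl rfl)) hu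
  refine ⟨e, f_injective ?_, f_injective ?_⟩
  · calc f (e * a) = f a * (f a * u + f b * v) - f a * f b * v := by rw [map_mul, he]; ring
      _ = f a := by rw [huv, fab]; ring
  · calc f (e * b) = f a * f b * u := by rw [map_mul, he]; ring
      _ = f 0 := by rw [fab, zero_mul, map_zero]

variable {p q : Ideal R} [p.IsPrime] [q.IsPrime]

theorem mk_mem_nonZeroDivisors_quotient_inf {c : R} (hp : c ∉ p) (hq : c ∉ q) :
    Ideal.Quotient.mk (p ⊓ q) c ∈ nonZeroDivisors (R ⧸ p ⊓ q) := by
  rw [mem_nonZeroDivisors_iff_right]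
  intro x hx
  obtain ⟨x, rfl⟩ := Ideal.Quotient.mk_surjective x
  rw [← map_mul, Ideal.Quotient.eq_zero_iff_mem] at hx
  exact Ideal.Quotient.eq_zero_iff_mem.mpr
    ⟨(‹p.IsPrime›.mem_or_mem hx.1).resolve_right hp, (‹q.IsPrime›.mem_or_mem hx.2).resolve_right hq⟩

theorem IsPruferRing.sup_eq_top_of_not_le_of_not_le (h : IsPruferRing (R ⧸ p ⊓ q))
    (hpq : ¬ p ≤ q) (hqp : ¬ q ≤ p) : p ⊔ q = ⊤ := by
  obtain ⟨a, hap, haq⟩ := SetLike.not_le_iff_exists.mp hpq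
  obtain ⟨b, hbq, hbp⟩ := SetLike.not_le_iff_exists.mp hqp
  have mul_eq_zero : Ideal.Quotient.mk (p ⊓ q) a * Ideal.Quotient.mk (p ⊓ q) b = 0 := by
    rw [← map_mul, Ideal.Quotient.eq_zero_iff_mem]
    exact ⟨p.mul_mem_right b hap, q.mul_mem_left a hbq⟩
  have add_regular : Ideal.Quotient.mk (p ⊓ q) a + Ideal.Quotient.mk (p ⊓ q) b ∈
      nonZeroDivisors (R ⧸ p ⊓ q) := by
    rw [← map_add]
    exact mk_mem_nonZeroDivisors_quotient_inf (mt (Ideal.add_mem_iff_right p hap).mp hbp)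
      (mt (Ideal.add_mem_iff_left q hbq).mp haq)
  obtain ⟨e, hea, heb⟩ := h.exists_mul_eq_self_and_mul_eq_zero mul_eq_zero add_regular
  obtain ⟨e, rfl⟩ := Ideal.Quotient.mk_surjective e
  rw [← map_mul, Ideal.Quotient.mk_eq_mk_iff_sub_mem, ← sub_one_mul] at hea
  rw [← map_mul, Ideal.Quotient.eq_zero_iff_mem] at heb
  have e_mem : e ∈ p := (‹p.IsPrime›.mem_or_mem heb.1).resolve_right hbp
  have e_sub_one_mem : e - 1 ∈ q := (‹q.IsPrime›.mem_or_mem hea.2).resolve_right haq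
  rw [Ideal.eq_top_iff_one, ← sub_sub_cancel e 1]
  exact sub_mem (Ideal.mem_sup_left e_mem) (Ideal.mem_sup_right e_sub_one_mem)

theorem IsPrePruferRing.le_or_le_of_inf_ne_bot (h : IsPrePruferRing R) (hsup : p ⊔ q ≠ ⊤)
    (hinf : p ⊓ q ≠ ⊥) : p ≤ q ∨ q ≤ p := by
  by_contra! hincomp
  have inf_ne_top : p ⊓ q ≠ ⊤ := ne_top_of_le_ne_top hsup (inf_le_left.trans le_sup_left)
  exact hsup ((h _ hinf inf_ne_top).sup_eq_top_of_not_le_of_not_le hincomp.1 hincomp.2)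

end Prufer

section Noetherian

variable {R : Type*} [CommRing R] [IsNoetherianRing R]

theorem exists_lt_lt_incompRel_of_lt_of_covBy {p₀ p₁ p₂ : PrimeSpectrum R} (h₀₁ : p₀ < p₁)
    (h₁₂ : p₁ ⋖ p₂) : ∃ q, p₀ < q ∧ q < p₂ ∧ IncompRel (· ≤ ·) p₁ q := by
  obtain ⟨y, hy₂, hy₁⟩ := SetLike.exists_of_lt ((p₁.asIdeal_lt_asIdeal p₂).mpr h₁₂.lt)
  obtain ⟨q, hyq, h₀q, hq₂⟩ := PrimeSpectrum.exist_mem_one_of_mem_two h₀₁ h₁₂.lt hy₂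
  have not_le : ¬ q ≤ p₁ := fun hq₁ ↦ hy₁ (hq₁ hyq)
  exact ⟨q, h₀q, hq₂, fun h₁q ↦ h₁₂.2 (lt_of_le_not_ge h₁q not_le) hq₂, not_le⟩

theorem exists_incompRel_of_lt_of_lt {p₀ p₁ p₂ : PrimeSpectrum R} (h₀₁ : p₀ < p₁)
    (h₁₂ : p₁ < p₂) :
    ∃ p q, p₀ < p ∧ p < p₂ ∧ p₀ < q ∧ q < p₂ ∧ IncompRel (· ≤ ·) p q := by
  have : WellFoundedGT (PrimeSpectrum R) :=
    StrictMono.wellFoundedGT (f := PrimeSpectrum.asIdeal) fun _ _ ↦ id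
  obtain ⟨p, h₁p, hp₂⟩ := exists_le_covBy_of_lt h₁₂
  have h₀p : p₀ < p := h₀₁.trans_le h₁p
  obtain ⟨q, h₀q, hq₂, hpq⟩ := exists_lt_lt_incompRel_of_lt_of_covBy h₀p hp₂
  exact ⟨p, q, h₀p, hp₂.lt, h₀q, hq₂, hpq⟩

theorem ringKrullDim_le_one_of_forall_le_or_le
    (h : ∀ p q : PrimeSpectrum R, p.asIdeal ⊔ q.asIdeal ≠ ⊤ → p.asIdeal ⊓ q.asIdeal ≠ ⊥ →
      p ≤ q ∨ q ≤ p) : ringKrullDim R ≤ 1 := by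
  rw [ringKrullDim, Order.krullDim_le_one_iff]
  intro p₁
  rw [isMin_iff_forall_not_lt, isMax_iff_forall_not_lt]
  by_contra! hchain
  obtain ⟨⟨p₀, h₀₁⟩, p₂, h₁₂⟩ := hchain
  obtain ⟨p, q, h₀p, hp₂, h₀q, hq₂, hpq⟩ := exists_incompRel_of_lt_of_lt h₀₁ h₁₂
  have sup_ne_top : p.asIdeal ⊔ q.asIdeal ≠ ⊤ :=
    ne_top_of_le_ne_top p₂.isPrime.ne_top (sup_le hp₂.le hq₂.le)
  have inf_ne_bot : p.asIdeal ⊓ q.asIdeal ≠ ⊥ := fun hbot ↦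
    (p₀.isPrime.inf_le.mp (hbot.trans_le bot_le)).elim h₀p.not_ge h₀q.not_ge
  exact (h p q sup_ne_top inf_ne_bot).elim hpq.1 hpq.2

end Noetherian

theorem stmt19 {R : Type*} [CommRing R] [IsNoetherianRing R] (h : IsPrePruferRing R) :
    ringKrullDim R ≤ 1 :=
  ringKrullDim_le_one_of_forall_le_or_le fun _ _ ↦ h.le_or_le_of_inf_ne_bot
end
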